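/- Let k be a field and f = g·h a product of two elements g, h of the free algebra k⟨x,y⟩, and set A = k⟨x,y⟩/(f). Then for every point p₁ ∈ k² with h₀(p₁) = 0 and every point p₂ ∈ k² with g₀(p₂) = 0, one has Ext¹_A(k(p₁), k(p₂)) ≠ 0. -/

import Mathlib

open CategoryTheory Opposite

noncomputable section

/-- The abelianization map `k⟨x,y⟩ → k[x,y]`. -/
def abel (k : Type) [Field k] : FreeAlgebra k (Fin 2) →ₐ[k] MvPolynomial (Fin 2) k :=
  FreeAlgebra.lift k MvPolynomial.X

/-- Evaluation of a noncommutative polynomial at a point of `k²`. -/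
def evalAt (k : Type) [Field k] (p : Fin 2 → k) : FreeAlgebra k (Fin 2) →ₐ[k] k :=
  FreeAlgebra.lift k p

lemma eval_abel (k : Type) [Field k] (p : Fin 2 → k) (g : FreeAlgebra k (Fin 2)) :
    MvPolynomial.eval p (abel k g) = evalAt k p g := by
  have h : (MvPolynomial.aeval p).comp (abel k) = evalAt k p := by
    apply FreeAlgebra.hom_ext
    funext i
    simp [abel, evalAt]
  have h2 : (MvPolynomial.aeval p) (abel k g) = evalAt k p g := by
    rw [← h]; rfl
  have h3 : (MvPolynomial.aeval p) (abel k g) = MvPolynomial.eval p (abel k g) := by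
    rw [← MvPolynomial.coe_aeval_eq_eval]; rfl
  rw [← h3, h2]

/-- The quotient algebra `k⟨x,y⟩/(f)` of the free algebra by the two-sided ideal
generated by `f`. -/
abbrev quotAlg (k : Type) [Field k] (f : FreeAlgebra k (Fin 2)) : Type :=
  RingQuot (fun a b : FreeAlgebra k (Fin 2) => a = f ∧ b = 0)

/-- The one-dimensional representation of `k⟨x,y⟩/(f)` given by a point `p` of the plane
curve `f₀ = 0`. -/
def pointHom (k : Type) [Field k] (f : FreeAlgebra k (Fin 2)) (p : Fin 2 → k)
    (h : MvPolynomial.eval p (abel k f) = 0) : quotAlg k f →ₐ[k] k :=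
  RingQuot.liftAlgHom k ⟨evalAt k p, by
    rintro a b ⟨rfl, rfl⟩
    rw [← eval_abel k p a, h, map_zero]⟩

/-- The one-dimensional module `k(p)` over `k⟨x,y⟩/(f)`. -/
def pointMod (k : Type) [Field k] (f : FreeAlgebra k (Fin 2)) (p : Fin 2 → k)
    (h : MvPolynomial.eval p (abel k f) = 0) : ModuleCat (quotAlg k f) :=
  letI : Module (quotAlg k f) k := Module.compHom k (pointHom k f p h).toRingHom
  ModuleCat.of (quotAlg k f) k

/-- `Ext¹` of modules over the `k`-algebra `A` (as a `k`-vector space). -/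
def Ext1 (k : Type) [Field k] (A : Type) [Ring A] [Algebra k A] (M N : ModuleCat A) :
    ModuleCat k :=
  ((Ext k (ModuleCat A) 1).obj (op M)).obj N

/-- If `Ext¹(M, N)` is trivial, every short exact sequence `0 → N → E → M → 0` splits. -/
lemma splits_of_subsingleton (k : Type) [Field k] (A : Type) [Ring A] [Algebra k A]
    (S : ShortComplex (ModuleCat.{0} A)) (hS : S.ShortExact)
    (hsub : Subsingleton (Ext1 k A S.X₃ S.X₁)) : ∃ s : S.X₃ ⟶ S.X₂, s ≫ S.g = 𝟙 _ := by
  have := hS.mono_f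
  have := hS.epi_g
  let P := ProjectiveResolution.of S.X₃
  have hz : Limits.IsZero ((P.complex.linearYonedaObj k S.X₁).homology 1) :=
    Limits.IsZero.of_iso (ModuleCat.isZero_of_subsingleton (Ext1 k A S.X₃ S.X₁))
      (P.isoExt (R := k) 1 S.X₁).symm
  rw [← HomologicalComplex.exactAt_iff_isZero_homology,
    HomologicalComplex.exactAt_iff' _ 0 1 2 (by simp) (by simp),
    ShortComplex.moduleCat_exact_iff] at hz
  let p : P.complex.X 0 ⟶ S.X₃ := P.π.f 0
  have hdp : P.complex.d 1 0 ≫ p = 0 := P.complex_d_comp_π_f_zero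
  have : Projective (P.complex.X 0) := P.projective 0
  let l : P.complex.X 0 ⟶ S.X₂ := Projective.factorThru p S.g
  have hl : l ≫ S.g = p := Projective.factorThru_comp _ _
  have h0 : (P.complex.d 1 0 ≫ l) ≫ S.g = 0 := by rw [Category.assoc, hl, hdp]
  let φ : P.complex.X 1 ⟶ S.X₁ := hS.exact.lift (P.complex.d 1 0 ≫ l) h0
  have hφ : φ ≫ S.f = P.complex.d 1 0 ≫ l := hS.exact.lift_f _ _
  have hc : P.complex.d 2 1 ≫ φ = 0 := by
    rw [← cancel_mono S.f, Category.assoc, hφ, ← Category.assoc, P.complex.d_comp_d]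
    simp
  obtain ⟨ψ, hψ⟩ := hz φ hc
  have hψ' : P.complex.d 1 0 ≫ (show P.complex.X 0 ⟶ S.X₁ from ψ) = φ := hψ
  have hk : P.complex.d 1 0 ≫ (l - (show P.complex.X 0 ⟶ S.X₁ from ψ) ≫ S.f) = 0 := by
    rw [Preadditive.comp_sub, ← Category.assoc, hψ', hφ, sub_self]
  have hex := P.exact₀
  have : Epi p := inferInstanceAs (Epi (P.π.f 0))
  have : Epi (ShortComplex.mk _ _ P.complex_d_comp_π_f_zero).g := this
  refine ⟨hex.desc _ hk, ?_⟩
  have h1 : p ≫ hex.desc _ hk = _ := hex.g_desc _ hk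
  rw [← cancel_epi p]
  erw [← Category.assoc, h1]
  rw [Preadditive.sub_comp, hl, Category.assoc, S.zero]
  erw [Limits.comp_zero, sub_zero, Category.comp_id]

/-- The upper triangular two-dimensional representation of the free algebra. -/
def triRep (k : Type) [Field k] (p₁ p₂ u : Fin 2 → k) :
    FreeAlgebra k (Fin 2) →ₐ[k] Matrix (Fin 2) (Fin 2) k :=
  FreeAlgebra.lift k (fun i => !![p₂ i, u i; 0, p₁ i])

lemma triRep_entries (k : Type) [Field k] (p₁ p₂ u : Fin 2 → k) (a : FreeAlgebra k (Fin 2)) :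
    triRep k p₁ p₂ u a 0 0 = evalAt k p₂ a ∧ triRep k p₁ p₂ u a 1 1 = evalAt k p₁ a ∧
      triRep k p₁ p₂ u a 1 0 = 0 := by
  induction a using FreeAlgebra.induction with
  | grade0 r => simp [Matrix.algebraMap_matrix_apply]
  | grade1 i => simp [triRep, evalAt]
  | mul a b ha hb =>
    obtain ⟨a1, a2, a3⟩ := ha
    obtain ⟨b1, b2, b3⟩ := hb
    simp [Matrix.mul_apply, Fin.sum_univ_two, a1, a2, a3, b1, b2, b3]
  | add a b ha hb =>
    obtain ⟨a1, a2, a3⟩ := ha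
    obtain ⟨b1, b2, b3⟩ := hb
    simp [a1, a2, a3, b1, b2, b3]

lemma triRep_mul_eq_zero (k : Type) [Field k] (p₁ p₂ u : Fin 2 → k)
    (g h : FreeAlgebra k (Fin 2)) (hh : evalAt k p₁ h = 0) (hg : evalAt k p₂ g = 0) :
    triRep k p₁ p₂ u (g * h) = 0 := by
  obtain ⟨a1, a2, a3⟩ := triRep_entries k p₁ p₂ u g
  obtain ⟨b1, b2, b3⟩ := triRep_entries k p₁ p₂ u h
  ext i j
  fin_cases i <;> fin_cases j <;>
    simp [Matrix.mul_apply, Fin.sum_univ_two, a1, a2, a3, b1, b2, b3, hh, hg]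

/-- The induced representation of the quotient algebra. -/
def triHom (k : Type) [Field k] (p₁ p₂ u : Fin 2 → k) (f : FreeAlgebra k (Fin 2))
    (hf : triRep k p₁ p₂ u f = 0) : quotAlg k f →ₐ[k] Matrix (Fin 2) (Fin 2) k :=
  RingQuot.liftAlgHom k ⟨triRep k p₁ p₂ u, by
    rintro a b ⟨rfl, rfl⟩
    rw [hf, map_zero]⟩

/-- The two-dimensional module given by `triHom`. -/
def triMod (k : Type) [Field k] (p₁ p₂ u : Fin 2 → k) (f : FreeAlgebra k (Fin 2))
    (hf : triRep k p₁ p₂ u f = 0) : ModuleCat (quotAlg k f) :=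
  letI : Module (quotAlg k f) (Fin 2 → k) := Module.compHom (Fin 2 → k)
    (((Matrix.toLinAlgEquiv' (R := k) (n := Fin 2)).toAlgHom.comp
      (triHom k p₁ p₂ u f hf)).toRingHom)
  ModuleCat.of (quotAlg k f) (Fin 2 → k)

lemma triMod_smul (k : Type) [Field k] (p₁ p₂ u : Fin 2 → k) (f : FreeAlgebra k (Fin 2))
    (hf : triRep k p₁ p₂ u f = 0) (a : FreeAlgebra k (Fin 2)) (v : Fin 2 → k) :
    ((RingQuot.mkAlgHom k _ a : quotAlg k f) • (show triMod k p₁ p₂ u f hf from v)) =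
      (show triMod k p₁ p₂ u f hf from (triRep k p₁ p₂ u a).mulVec v) := by
  change (triHom k p₁ p₂ u f hf (RingQuot.mkAlgHom k _ a)).mulVec v = _
  rw [triHom, RingQuot.liftAlgHom_mkAlgHom_apply]

lemma pointMod_smul (k : Type) [Field k] (f : FreeAlgebra k (Fin 2)) (p : Fin 2 → k)
    (h : MvPolynomial.eval p (abel k f) = 0) (a : FreeAlgebra k (Fin 2)) (v : k) :
    ((RingQuot.mkAlgHom k _ a : quotAlg k f) • (show pointMod k f p h from v)) =
      (show pointMod k f p h from evalAt k p a * v) := by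
  change (pointHom k f p h (RingQuot.mkAlgHom k _ a)) * v = _
  rw [pointHom, RingQuot.liftAlgHom_mkAlgHom_apply]

/-- Inclusion of `k(p₂)` into the extension. -/
def triInc (k : Type) [Field k] (p₁ p₂ u : Fin 2 → k) (f : FreeAlgebra k (Fin 2))
    (hf : triRep k p₁ p₂ u f = 0) (h : MvPolynomial.eval p₂ (abel k f) = 0) :
    pointMod k f p₂ h ⟶ triMod k p₁ p₂ u f hf :=
  ModuleCat.ofHom (X := pointMod k f p₂ h) (Y := triMod k p₁ p₂ u f hf)
    { toFun := fun (s : k) => (![s, 0] : Fin 2 → k)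
      map_add' := by
        intro s t
        change (![(s + t : k), 0] : Fin 2 → k) = ![(s : k), 0] + ![(t : k), 0]
        simp
        rfl
      map_smul' := by
        intro a s
        obtain ⟨a, rfl⟩ := RingQuot.mkAlgHom_surjective k _ a
        obtain ⟨a1, a2, a3⟩ := triRep_entries k p₁ p₂ u a
        refine Eq.trans ?_ (triMod_smul k p₁ p₂ u f hf a ![s, 0]).symm
        have e := pointMod_smul k f p₂ h a s
        refine (congrArg (fun s : k => (![s, 0] : Fin 2 → k)) e).trans ?_
        funext i
        fin_cases i
        · simp [a1]
        · simp [a3]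
          exact (zero_mul (M₀ := k) s).symm }

/-- Projection of the extension onto `k(p₁)`. -/
def triProj (k : Type) [Field k] (p₁ p₂ u : Fin 2 → k) (f : FreeAlgebra k (Fin 2))
    (hf : triRep k p₁ p₂ u f = 0) (h : MvPolynomial.eval p₁ (abel k f) = 0) :
    triMod k p₁ p₂ u f hf ⟶ pointMod k f p₁ h :=
  ModuleCat.ofHom (X := triMod k p₁ p₂ u f hf) (Y := pointMod k f p₁ h)
    { toFun := fun (v : Fin 2 → k) => (v 1 : k)
      map_add' := by
        intro s t
        rfl
      map_smul' := by
        intro a v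
        obtain ⟨a, rfl⟩ := RingQuot.mkAlgHom_surjective k _ a
        obtain ⟨a1, a2, a3⟩ := triRep_entries k p₁ p₂ u a
        let w : Fin 2 → k := v
        refine Eq.trans ?_ (pointMod_smul k f p₁ h a (w 1)).symm
        have e := triMod_smul k p₁ p₂ u f hf a w
        refine (congrArg (fun s : Fin 2 → k => s 1) e).trans ?_
        simp [Matrix.mulVec, dotProduct, Fin.sum_univ_two, a2, a3] }

lemma exists_not_multiple (k : Type) [Field k] (q : Fin 2 → k) :
    ∃ u : Fin 2 → k, ∀ c : k, u ≠ c • q := by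
  by_cases h0 : q 0 = 0
  · refine ⟨![1, 0], fun c hc => ?_⟩
    have := congrFun hc 0
    simp [h0] at this
  · refine ⟨![0, 1], fun c hc => ?_⟩
    have e0 := congrFun hc 0
    have e1 := congrFun hc 1
    simp [h0] at e0
    simp [e0] at e1

/-- for a factorisation `f = g·h` in the free algebra `k⟨x,y⟩`, every point
`p₁` of the curve `h₀ = 0` and every point `p₂` of the curve `g₀ = 0` satisfy
`Ext¹_A(k(p₁), k(p₂)) ≠ 0`, where `A = k⟨x,y⟩/(f)`. -/
theorem ext_nonvanishing_of_factorisation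
    (k : Type) [Field k] (g h : FreeAlgebra k (Fin 2)) (p₁ p₂ : Fin 2 → k)
    (hp₁ : MvPolynomial.eval p₁ (abel k h) = 0)
    (hp₂ : MvPolynomial.eval p₂ (abel k g) = 0) :
    Nontrivial (Ext1 k (quotAlg k (g * h))
      (pointMod k (g * h) p₁ (by rw [map_mul (abel k), map_mul, hp₁, mul_zero]))
      (pointMod k (g * h) p₂ (by rw [map_mul (abel k), map_mul, hp₂, zero_mul]))) := by
  have hh : evalAt k p₁ h = 0 := by rw [← eval_abel, hp₁]
  have hg : evalAt k p₂ g = 0 := by rw [← eval_abel, hp₂]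
  obtain ⟨u, hu⟩ := exists_not_multiple k (p₁ - p₂)
  have hf := triRep_mul_eq_zero k p₁ p₂ u g h hh hg
  have q₁ : MvPolynomial.eval p₁ (abel k (g * h)) = 0 := by
    rw [map_mul (abel k), map_mul, hp₁, mul_zero]
  have q₂ : MvPolynomial.eval p₂ (abel k (g * h)) = 0 := by
    rw [map_mul (abel k), map_mul, hp₂, zero_mul]
  by_contra hn
  rw [not_nontrivial_iff_subsingleton] at hn
  let S : ShortComplex (ModuleCat.{0} (quotAlg k (g * h))) :=
    ShortComplex.mk (triInc k p₁ p₂ u (g * h) hf q₂) (triProj k p₁ p₂ u (g * h) hf q₁) (by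
      ext s
      rfl)
  have hS : S.ShortExact :=
    { exact := by
        rw [ShortComplex.moduleCat_exact_iff]
        intro v hv
        let w : Fin 2 → k := v
        have hw : w 1 = 0 := hv
        refine ⟨(w 0 : k), ?_⟩
        change (![w 0, 0] : Fin 2 → k) = w
        funext i
        fin_cases i <;> simp [hw]
      mono_f := by
        rw [ModuleCat.mono_iff_injective]
        intro s t hst
        exact congrFun (show (![(s : k), 0] : Fin 2 → k) = ![(t : k), 0] from hst) 0
      epi_g := by
        rw [ModuleCat.epi_iff_surjective]
        intro t
        exact ⟨(![0, (t : k)] : Fin 2 → k), rfl⟩ }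
  obtain ⟨s, hs⟩ := splits_of_subsingleton k _ S hS hn
  let one : pointMod k (g * h) p₁ q₁ := (1 : k)
  let w : Fin 2 → k := s.hom one
  have hw1 : w 1 = 1 := by
    have := congrArg (fun t => t.hom one) hs
    exact this
  apply hu (w 0)
  funext i
  have e1 := triMod_smul k p₁ p₂ u (g * h) hf (FreeAlgebra.ι k i) w
  have e2 := pointMod_smul k (g * h) p₁ q₁ (FreeAlgebra.ι k i) 1
  have e3 := s.hom.map_smul (RingQuot.mkAlgHom k _ (FreeAlgebra.ι k i)) one
  have e4 := pointMod_smul k (g * h) p₁ q₁ (algebraMap k _ (p₁ i)) 1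
  have e5 := triMod_smul k p₁ p₂ u (g * h) hf (algebraMap k _ (p₁ i)) w
  have e6 := s.hom.map_smul (RingQuot.mkAlgHom k _ (algebraMap k _ (p₁ i))) one
  have e7 : evalAt k p₁ (FreeAlgebra.ι k i) * 1 =
      evalAt k p₁ (algebraMap k _ (p₁ i)) * 1 := by simp [evalAt]
  have e8 : (triRep k p₁ p₂ u (FreeAlgebra.ι k i)).mulVec w =
      (triRep k p₁ p₂ u (algebraMap k _ (p₁ i))).mulVec w :=
    e1.symm.trans (e3.symm.trans ((congrArg (fun t => s.hom t)
      (e2.trans (e7.trans e4.symm))).trans (e6.trans e5)))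
  have e9 := congrFun e8 0
  simp [triRep, Matrix.mulVec, dotProduct, Fin.sum_univ_two, hw1,
    Matrix.algebraMap_matrix_apply] at e9
  simp only [Pi.smul_apply, Pi.sub_apply, smul_eq_mul]
  linear_combination e9

end
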